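/- Let r be a positive integer, and let P be a Fano polygon with vertices v₁, …, v_k listed in counterclockwise cyclic order, such that det(v_i, v_{i+1}) = r for every i (indices modulo k). Then k ≤ 6. -/

import Mathlib

/-!
Since `det (v i, v (i+1)) = det (v (i+1), v (i+2))` and `v (i+1)` is primitive, `v i + v (i+2)` is
an integer multiple of `v (i+1)`, so by induction `r` divides every `det (v i, v j)`. Convexity at
the edge from `v i` to `v (i+1)` gives `det (v (i+1), v j) - det (v i, v j) > -r` for every other
vertex `v j`, and divisibility improves the bound to `≥ 0`. Hence `i ↦ det (v i, v j)` is monotone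
along the polygon from `i = j + 1`, where it equals `-r`, to `i = j - 1`, where it equals `r`; all
determinants therefore lie in `{-r, 0, r}`.

In the basis `v 0, v 1` the vertices become primitive integer vectors with mutual determinants in
`{-1, 0, 1}`. Two such vectors that agree modulo 2 have even determinant, hence determinant `0`, so
they are equal or opposite. Each of the three nonzero classes modulo 2 therefore contains at most
two vertices.
-/

/-- det(u,v) = u₁v₂ − u₂v₁ for u, v ∈ ℤ². -/
def det2 (u v : ℤ × ℤ) : ℤ := u.1 * v.2 - u.2 * v.1

/-- A vector of ℤ² is primitive if the gcd of its two coordinates is 1. -/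
def IsPrimitive (u : ℤ × ℤ) : Prop := Int.gcd u.1 u.2 = 1

/-- `v : ZMod k → ℤ × ℤ` lists, in counterclockwise cyclic order, the vertices of a
Fano polygon: a convex lattice polygon (so k ≥ 3 and the points are in strictly
convex position, every other vertex lying strictly to the left of each directed
edge v_i → v_{i+1}) whose vertices are primitive and whose interior contains the
origin (the origin lies strictly to the left of each directed edge, which is
exactly 0 < det(v_i, v_{i+1})). -/
def IsFanoCCW {k : ℕ} (v : ZMod k → ℤ × ℤ) : Prop :=
  3 ≤ k ∧ (∀ i, IsPrimitive (v i)) ∧ (∀ i, 0 < det2 (v i) (v (i + 1))) ∧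
    ∀ i j : ZMod k, j ≠ i → j ≠ i + 1 → 0 < det2 (v (i + 1) - v i) (v j - v i)

section Det2

lemma det2_self (u : ℤ × ℤ) : det2 u u = 0 := by
  simp only [det2]
  ring

lemma det2_swap (u w : ℤ × ℤ) : det2 w u = -det2 u w := by
  simp only [det2]
  ring

lemma det2_add_left (u u' w : ℤ × ℤ) : det2 (u + u') w = det2 u w + det2 u' w := by
  simp only [det2, Prod.fst_add, Prod.snd_add]
  ring

lemma det2_smul_left (c : ℤ) (u w : ℤ × ℤ) : det2 (c • u) w = c * det2 u w := by
  simp only [det2, Prod.smul_fst, Prod.smul_snd, smul_eq_mul]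
  ring

lemma det2_sub_sub (u w x : ℤ × ℤ) :
    det2 (w - u) (x - u) = det2 w x - det2 u x + det2 u w := by
  simp only [det2, Prod.fst_sub, Prod.snd_sub]
  ring

lemma det2_smul_add_smul (c d a b : ℤ × ℤ) :
    det2 (c.1 • a + c.2 • b) (d.1 • a + d.2 • b) = det2 c d * det2 a b := by
  simp only [det2, Prod.fst_add, Prod.snd_add, Prod.smul_fst, Prod.smul_snd, smul_eq_mul]
  ring

lemma det2_cramer (a b u : ℤ × ℤ) : det2 a b • u = det2 u b • a + det2 a u • b := by
  ext <;>
    simp only [det2, Prod.fst_add, Prod.snd_add, Prod.smul_fst, Prod.smul_snd, smul_eq_mul] <;>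
    ring

lemma exists_eq_smul_add_smul_of_det2_dvd {a b u : ℤ × ℤ} (hab : det2 a b ≠ 0)
    (ha : det2 a b ∣ det2 a u) (hb : det2 a b ∣ det2 u b) :
    ∃ c : ℤ × ℤ, u = c.1 • a + c.2 • b := by
  obtain ⟨y, hy⟩ := ha
  obtain ⟨x, hx⟩ := hb
  refine ⟨(x, y), smul_right_injective _ hab ?_⟩
  calc det2 a b • u = det2 u b • a + det2 a u • b := det2_cramer a b u
    _ = det2 a b • (x • a + y • b) := by rw [hx, hy, mul_smul, mul_smul, smul_add]

lemma det2_le_det2_of_dvd {u w x : ℤ × ℤ} (hu : det2 u w ∣ det2 u x) (hw : det2 u w ∣ det2 w x)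
    (hleft : 0 < det2 (w - u) (x - u)) : det2 u x ≤ det2 w x := by
  rw [det2_sub_sub] at hleft
  by_contra! hlt
  have hle : det2 u w ≤ det2 u x - det2 w x := Int.le_of_dvd (by linarith) (dvd_sub hu hw)
  linarith

end Det2

section Primitive

lemma isPrimitive_iff_exists_det2_eq_one {u : ℤ × ℤ} :
    IsPrimitive u ↔ ∃ w, det2 u w = 1 := by
  rw [IsPrimitive, ← Int.isCoprime_iff_gcd_eq_one]
  constructor
  · rintro ⟨a, b, hab⟩
    exact ⟨(-b, a), by simp only [det2]; linarith⟩
  · rintro ⟨w, hw⟩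
    exact ⟨w.2, -w.1, by simp only [det2] at hw; linarith⟩

lemma IsPrimitive.of_smul_add_smul {c a b : ℤ × ℤ} (h : IsPrimitive (c.1 • a + c.2 • b)) :
    IsPrimitive c := by
  obtain ⟨w, hw⟩ := isPrimitive_iff_exists_det2_eq_one.mp h
  refine isPrimitive_iff_exists_det2_eq_one.mpr ⟨(-det2 b w, det2 a w), ?_⟩
  rw [det2_add_left, det2_smul_left, det2_smul_left] at hw
  simp only [det2] at hw ⊢
  linarith

lemma IsPrimitive.exists_eq_smul_of_det2_eq_zero {u w : ℤ × ℤ} (hw : IsPrimitive w)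
    (h : det2 w u = 0) : ∃ c : ℤ, u = c • w := by
  obtain ⟨z, hz⟩ := isPrimitive_iff_exists_det2_eq_one.mp hw
  exact ⟨det2 u z, by simpa [hz, h] using det2_cramer w z u⟩

lemma IsPrimitive.eq_or_eq_neg_of_det2_eq_zero {u w : ℤ × ℤ} (hu : IsPrimitive u)
    (hw : IsPrimitive w) (h : det2 w u = 0) : u = w ∨ u = -w := by
  obtain ⟨c, rfl⟩ := hw.exists_eq_smul_of_det2_eq_zero h
  obtain ⟨z, hz⟩ := isPrimitive_iff_exists_det2_eq_one.mp hu
  rw [det2_smul_left] at hz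
  rcases Int.isUnit_iff.mp (IsUnit.of_mul_eq_one _ hz) with rfl | rfl <;> simp

lemma IsPrimitive.exists_add_eq_smul {u w x : ℤ × ℤ} (hw : IsPrimitive w)
    (h : det2 u w = det2 w x) : ∃ c : ℤ, u + x = c • w := by
  refine hw.exists_eq_smul_of_det2_eq_zero ?_
  rw [det2_swap, det2_add_left, h, det2_swap w x, add_neg_cancel, neg_zero]

end Primitive

section Reduction

/-- The class of a lattice vector in `(ℤ/n)²`; it is used with `n = 2` to sort vectors by parity. -/
def reduceMod (n : ℕ) (u : ℤ × ℤ) : ZMod n × ZMod n := (u.1, u.2)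

lemma intCast_det2 (n : ℕ) (u w : ℤ × ℤ) :
    (det2 u w : ZMod n) =
      (reduceMod n u).1 * (reduceMod n w).2 - (reduceMod n u).2 * (reduceMod n w).1 := by
  simp only [det2, reduceMod, Int.cast_sub, Int.cast_mul]

lemma dvd_det2_of_reduceMod_eq {n : ℕ} {u w : ℤ × ℤ} (h : reduceMod n u = reduceMod n w) :
    (n : ℤ) ∣ det2 u w := by
  rw [← ZMod.intCast_zmod_eq_zero_iff_dvd, intCast_det2, h]
  ring

lemma IsPrimitive.reduceMod_ne_zero {n : ℕ} (hn : n ≠ 1) {u : ℤ × ℤ} (hu : IsPrimitive u) :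
    reduceMod n u ≠ 0 := by
  intro h
  obtain ⟨w, hw⟩ := isPrimitive_iff_exists_det2_eq_one.mp hu
  have := ZMod.nontrivial_iff.mpr hn
  have hone : (1 : ZMod n) = 0 := by simpa [hw, h] using intCast_det2 n u w
  exact one_ne_zero hone

lemma IsPrimitive.eq_or_eq_neg_of_reduceMod_two_eq {u w : ℤ × ℤ} (hu : IsPrimitive u)
    (hw : IsPrimitive w) (hdet : |det2 w u| ≤ 1) (h : reduceMod 2 w = reduceMod 2 u) :
    u = w ∨ u = -w :=
  hu.eq_or_eq_neg_of_det2_eq_zero hw <|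
    Int.eq_zero_of_abs_lt_dvd (dvd_det2_of_reduceMod_eq h) (hdet.trans_lt one_lt_two)

end Reduction

section Counting

variable {ι : Type*} [Fintype ι] {v : ι → ℤ × ℤ}

lemma card_le_six_of_abs_det2_le_one (hinj : Function.Injective v)
    (hprim : ∀ i, IsPrimitive (v i)) (hdet : ∀ i j, |det2 (v i) (v j)| ≤ 1) :
    Fintype.card ι ≤ 6 := by
  classical
  have hclass : ∀ i ∈ Finset.univ, reduceMod 2 (v i) ∈ Finset.univ.erase (0 : ZMod 2 × ZMod 2) :=
    fun i _ ↦ by simpa using (hprim i).reduceMod_ne_zero (by norm_num)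
  refine Finset.card_le_mul_card_image_of_maps_to hclass 2 fun c _ ↦ ?_
  obtain hempty | ⟨i, hi⟩ := ({j | reduceMod 2 (v j) = c} : Finset ι).eq_empty_or_nonempty
  · simp [hempty]
  have hpair : ∀ j ∈ ({j | reduceMod 2 (v j) = c} : Finset ι),
      v j ∈ ({v i, -v i} : Finset (ℤ × ℤ)) := fun j hj ↦ by
    have hij : reduceMod 2 (v i) = reduceMod 2 (v j) := by simp_all
    simpa using (hprim j).eq_or_eq_neg_of_reduceMod_two_eq (hprim i) (hdet i j) hij
  exact (Finset.card_le_card_of_injOn v hpair hinj.injOn).trans Finset.card_le_two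

lemma card_le_six_of_det2_dvd (hinj : Function.Injective v) (hprim : ∀ i, IsPrimitive (v i))
    {a b : ℤ × ℤ} (hab : det2 a b ≠ 0) (ha : ∀ i, det2 a b ∣ det2 a (v i))
    (hb : ∀ i, det2 a b ∣ det2 (v i) b) (hdet : ∀ i j, |det2 (v i) (v j)| ≤ |det2 a b|) :
    Fintype.card ι ≤ 6 := by
  choose c hc using fun i ↦ exists_eq_smul_add_smul_of_det2_dvd hab (ha i) (hb i)
  have hcinj : Function.Injective c := fun i j hij ↦ hinj (by rw [hc i, hc j, hij])
  have hcprim : ∀ i, IsPrimitive (c i) := fun i ↦ .of_smul_add_smul (hc i ▸ hprim i)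
  refine card_le_six_of_abs_det2_le_one hcinj hcprim fun i j ↦ ?_
  refine le_of_mul_le_mul_right ?_ (abs_pos.mpr hab)
  calc |det2 (c i) (c j)| * |det2 a b| = |det2 (v i) (v j)| := by
        rw [hc i, hc j, det2_smul_add_smul, abs_mul]
    _ ≤ 1 * |det2 a b| := by rw [one_mul]; exact hdet i j

end Counting

section Cyclic

variable {k : ℕ} {v : ZMod k → ℤ × ℤ} {r : ℤ}

lemma forall_zmod_of_succ [NeZero k] {p : ZMod k → Prop} {j : ZMod k} (base : p j)
    (succ : ∀ i, p i → p (i + 1)) (i : ZMod k) : p i := by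
  have hadd : ∀ n : ℕ, p (j + n) := by
    intro n
    induction n with
    | zero => simpa using base
    | succ n ih => simpa [add_assoc] using succ _ ih
  simpa using hadd (i - j).val

lemma dvd_det2_of_det2_succ_eq [NeZero k] (hprim : ∀ i, IsPrimitive (v i))
    (hdet : ∀ i, det2 (v i) (v (i + 1)) = r) (i j : ZMod k) : r ∣ det2 (v i) (v j) := by
  suffices h : ∀ i, r ∣ det2 (v i) (v j) ∧ r ∣ det2 (v (i + 1)) (v j) from (h i).1
  refine forall_zmod_of_succ (j := j) ?_ ?_
  · simp [det2_self, det2_swap (v j), hdet]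
  · rintro i ⟨hi, hsucc⟩
    refine ⟨hsucc, ?_⟩
    obtain ⟨c, hc⟩ := (hprim (i + 1)).exists_add_eq_smul ((hdet i).trans (hdet (i + 1)).symm)
    have hsum : r ∣ det2 (v i) (v j) + det2 (v (i + 1 + 1)) (v j) := by
      rw [← det2_add_left, hc, det2_smul_left]
      exact hsucc.mul_left c
    exact (dvd_add_right hi).mp hsum

lemma IsFanoCCW.neZero (hF : IsFanoCCW v) : NeZero k :=
  ⟨by have := hF.1; lia⟩

lemma IsFanoCCW.injective (hF : IsFanoCCW v) : Function.Injective v := by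
  obtain ⟨-, -, hpos, hconv⟩ := hF
  intro i j hij
  by_contra hne
  by_cases hj : j = i + 1
  · exact (hpos i).ne' (by rw [← hj, hij, det2_self])
  · exact (hconv i j (Ne.symm hne) hj).ne' (by simp [det2, hij])

lemma IsFanoCCW.neg_le_det2 (hF : IsFanoCCW v) (hdet : ∀ i, det2 (v i) (v (i + 1)) = r)
    (i j : ZMod k) : -r ≤ det2 (v i) (v j) := by
  have := hF.neZero
  obtain ⟨-, hprim, hpos, hconv⟩ := hF
  have hself : -r ≤ det2 (v j) (v j) := by
    rw [det2_self, ← hdet 0]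
    exact neg_nonpos.mpr (hpos 0).le
  induction i using forall_zmod_of_succ (j := j) with
  | base => exact hself
  | succ i ih =>
    by_cases hi : j = i
    · rw [hi, det2_swap, hdet]
    by_cases hsucc : j = i + 1
    · rwa [← hsucc]
    have hdvd (m : ZMod k) : det2 (v i) (v (i + 1)) ∣ det2 (v m) (v j) :=
      hdet i ▸ dvd_det2_of_det2_succ_eq hprim hdet m j
    exact ih.trans (det2_le_det2_of_dvd (hdvd i) (hdvd (i + 1)) (hconv i j hi hsucc))

lemma IsFanoCCW.abs_det2_le (hF : IsFanoCCW v) (hdet : ∀ i, det2 (v i) (v (i + 1)) = r)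
    (i j : ZMod k) : |det2 (v i) (v j)| ≤ r := by
  refine abs_le.mpr ⟨hF.neg_le_det2 hdet i j, ?_⟩
  rw [det2_swap]
  exact neg_le.mp (hF.neg_le_det2 hdet j i)

end Cyclic

/-- a Fano polygon all of whose edge cones have determinant r has at
most 6 vertices. -/
theorem card_vertices_le_six (r : ℤ) (hr : 0 < r)
    (k : ℕ) (v : ZMod k → ℤ × ℤ)
    (hF : IsFanoCCW v)
    (hdet : ∀ i, det2 (v i) (v (i + 1)) = r) :
    k ≤ 6 := by
  have := hF.neZero
  have h01 : det2 (v 0) (v 1) = r := by simpa using hdet 0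
  have hdvd := dvd_det2_of_det2_succ_eq hF.2.1 hdet
  rw [← ZMod.card k]
  refine card_le_six_of_det2_dvd hF.injective hF.2.1 (a := v 0) (b := v 1) ?_ ?_ ?_ ?_ <;> rw [h01]
  · exact hr.ne'
  · exact fun i ↦ hdvd 0 i
  · exact fun i ↦ hdvd i 1
  · exact fun i j ↦ (hF.abs_det2_le hdet i j).trans (le_abs_self r)
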